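/- The Lie algebra g_φ is finite dimensional if and only if φ is a polynomial. Moreover, when φ is a polynomial with ℓ nonzero coefficients, dim_ℂ g_φ = k + 2, where k = ℓ+2 if φ(0) = φ'(0) = 0, k = ℓ+1 if exactly one of φ(0), φ'(0) is zero, and k = ℓ if both φ(0) ≠ 0 and φ'(0) ≠ 0. -/

import Mathlib

open Matrix
open scoped ContDiff

attribute [local instance] Matrix.normedAddCommGroup Matrix.normedSpace

noncomputable section

abbrev MatC (N : ℕ) := Matrix (Fin N) (Fin N) ℂ

/-- `J = Σ_{k=1}^N k E_{k,k}`. -/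
def Jmat (N : ℕ) : MatC N := Matrix.diagonal fun k => ((k : ℕ) + 1 : ℂ)

/-- `A = Σ_{k=1}^{N-1} a_k E_{k+1,k}`. -/
def Amat (N : ℕ) (a : ℕ → ℝ) : MatC N :=
  Matrix.of fun i j => if (i : ℕ) = (j : ℕ) + 1 then ((a ((j : ℕ) + 1) : ℝ) : ℂ) else 0

/-- the right-acting operator `𝒟`, `(Q·𝒟)(x) = x Q'(x) + x Q(x)(A−1)` -/
def OpD (N : ℕ) (a : ℕ → ℝ) : (ℝ → MatC N) → ℝ → MatC N := fun Q x =>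
  (x : ℂ) • deriv Q x + (x : ℂ) • (Q x * (Amat N a - 1))

/-- the right-acting operator `𝒟†`,
`(Q·𝒟†)(x) = −x Q'(x) − Q(x)(1+ν+J) + (xφ'(x) − x) Q(x)` -/
def OpDdag (N : ℕ) (ν : ℝ) (φ : ℂ → ℂ) : (ℝ → MatC N) → ℝ → MatC N := fun Q x =>
  -((x : ℂ) • deriv Q x) - Q x * (((1 : ℂ) + (ν : ℂ)) • (1 : MatC N) + Jmat N) +
    ((x : ℂ) * deriv φ (x : ℂ) - (x : ℂ)) • Q x

/-- the right-acting multiplication operator `m`, `(Q·m)(x) = x Q(x)` -/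
def OpM (N : ℕ) : (ℝ → MatC N) → ℝ → MatC N := fun Q x => (x : ℂ) • Q x

/-- the right-acting multiplication operator `m_j`, `(Q·m_j)(x) = x^j φ^{(j)}(x) Q(x)` -/
def OpMj (N : ℕ) (φ : ℂ → ℂ) (j : ℕ) : (ℝ → MatC N) → ℝ → MatC N := fun Q x =>
  ((x : ℂ) ^ j * iteratedDeriv j φ (x : ℂ)) • Q x

/-- the Lie bracket of right-acting operators: since `Q·(𝒮𝒯) = (Q·𝒮)·𝒯`, the product `𝒮𝒯`
acts as `T ∘ S`, and `[𝒮,𝒯] = 𝒮𝒯 − 𝒯𝒮` acts as `Q ↦ T (S Q) − S (T Q)`. -/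
def rbrk {N : ℕ} (S T : (ℝ → MatC N) → ℝ → MatC N) : (ℝ → MatC N) → ℝ → MatC N :=
  fun Q => T (S Q) - S (T Q)

/-- the Lie algebra `g_φ`, i.e. the complex span of `{1, 𝒟, 𝒟†, m, m₁, m₂, …}` inside the
space of right-acting operators -/
def gphi (N : ℕ) (a : ℕ → ℝ) (ν : ℝ) (φ : ℂ → ℂ) :
    Submodule ℂ ((ℝ → MatC N) → ℝ → MatC N) :=
  Submodule.span ℂ
    ({id, OpD N a, OpDdag N ν φ, OpM N} ∪ Set.range fun j : ℕ => OpMj N φ (j + 1))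

open Polynomial in
/-- the Euler operator `X d/dX` on polynomials -/
def eulerOp : Module.End ℂ ℂ[X] := (LinearMap.mulLeft ℂ (X : ℂ[X])) ∘ₗ Polynomial.derivative

open Polynomial in
lemma eulerOp_apply (q : ℂ[X]) : eulerOp q = X * derivative q := rfl

open Polynomial in
lemma eulerOp_X_pow (i : ℕ) : eulerOp (X ^ i : ℂ[X]) = (i : ℂ) • (X ^ i : ℂ[X]) := by
  rw [eulerOp_apply, derivative_X_pow, smul_eq_C_mul]
  cases i with
  | zero => simp
  | succ n =>
    simp only [Nat.add_sub_cancel]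
    ring

open Polynomial in
lemma eulerOp_gen (p : ℂ[X]) (j : ℕ) :
    eulerOp (X ^ (j+1) * derivative^[j+1] p) =
      ((j : ℂ) + 1) • (X ^ (j+1) * derivative^[j+1] p) + X ^ (j+2) * derivative^[j+2] p := by
  rw [eulerOp_apply, derivative_mul, derivative_X_pow, Function.iterate_succ_apply' _ (j+1),
    smul_eq_C_mul]
  simp only [Nat.add_sub_cancel, map_add, map_natCast, map_one, Nat.cast_add, Nat.cast_one]
  ring

open Polynomial in
/-- the span of `X^j p^{(j)}`, `j ≥ 1` -/
def Usub (p : ℂ[X]) : Submodule ℂ ℂ[X] :=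
  Submodule.span ℂ (Set.range fun j : ℕ => X ^ (j+1) * derivative^[j+1] p)

open Polynomial in
lemma Usub_invt (p : ℂ[X]) : Usub p ≤ (Usub p).comap eulerOp := by
  rw [Usub, Submodule.span_le]
  rintro _ ⟨j, rfl⟩
  simp only [Submodule.comap_coe, Set.mem_preimage, SetLike.mem_coe]
  rw [eulerOp_gen]
  refine Submodule.add_mem _ (Submodule.smul_mem _ _ (Submodule.subset_span ⟨j, rfl⟩)) ?_
  exact Submodule.subset_span ⟨j+1, rfl⟩

open Polynomial in
lemma Usub_aeval (p : ℂ[X]) (q : ℂ[X]) {r : ℂ[X]} (hr : r ∈ Usub p) :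
    (aeval eulerOp q) r ∈ Usub p := by
  induction q using Polynomial.induction_on' with
  | add q₁ q₂ h₁ h₂ => rw [map_add]; exact Submodule.add_mem _ h₁ h₂
  | monomial n c =>
    rw [aeval_monomial, Module.End.mul_apply, Module.algebraMap_end_apply]
    refine Submodule.smul_mem _ _ ?_
    induction n with
    | zero => simpa using hr
    | succ n ih => rw [pow_succ', Module.End.mul_apply]; exact Usub_invt p ih

open Polynomial in
lemma aeval_eulerOp_X_pow (q : ℂ[X]) (i : ℕ) :
    (aeval eulerOp q) (X ^ i : ℂ[X]) = (q.eval (i : ℂ)) • (X ^ i : ℂ[X]) := by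
  apply Module.End.aeval_apply_of_hasEigenvector
  refine ⟨Module.End.mem_eigenspace_iff.mpr (eulerOp_X_pow i), by simp⟩

open Polynomial in
lemma X_pow_mem_Usub (p : ℂ[X]) (i : ℕ) (hi : i ∈ p.support) (hi0 : i ≠ 0) :
    (X ^ i : ℂ[X]) ∈ Usub p := by
  have h1 : eulerOp p ∈ Usub p := Submodule.subset_span ⟨0, by simp [eulerOp_apply]⟩
  set q : ℂ[X] := ∏ k ∈ p.support.erase i, (X - C (k : ℂ)) with hq
  have h2 := Usub_aeval p q h1
  have h3 : (aeval eulerOp q) (eulerOp p) = (p.coeff i * i * q.eval (i : ℂ)) • (X ^ i : ℂ[X]) := by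
    conv_lhs => rw [p.as_sum_support_C_mul_X_pow]
    simp only [← smul_eq_C_mul, map_sum, map_smul, eulerOp_X_pow, aeval_eulerOp_X_pow, smul_smul]
    rw [Finset.sum_eq_single_of_mem i hi]
    intro k hk hki
    have : q.eval (k : ℂ) = 0 := by
      rw [hq, eval_prod]
      exact Finset.prod_eq_zero (Finset.mem_erase.mpr ⟨hki, hk⟩) (by simp)
    simp [this]
  have h4 : q.eval (i : ℂ) ≠ 0 := by
    rw [hq, eval_prod, Finset.prod_ne_zero_iff]
    intro k hk
    have := (Finset.mem_erase.mp hk).1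
    simp only [eval_sub, eval_X, eval_C, sub_ne_zero]
    exact_mod_cast this.symm
  rw [h3] at h2
  refine (Submodule.smul_mem_iff _ ?_).mp h2
  exact mul_ne_zero (mul_ne_zero (mem_support_iff.mp hi) (by exact_mod_cast hi0)) h4

open Polynomial in
lemma gen_mem_span (p : ℂ[X]) (j : ℕ) :
    X ^ j * derivative^[j] p ∈
      Submodule.span ℂ ((fun i : ℕ => (X ^ i : ℂ[X])) '' (p.support : Set ℕ)) := by
  conv in derivative^[j] p => rw [p.as_sum_support_C_mul_X_pow]
  rw [iterate_derivative_sum, Finset.mul_sum]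
  refine Submodule.sum_mem _ fun i hi => ?_
  rw [iterate_derivative_C_mul, iterate_derivative_X_pow_eq_smul]
  by_cases hij : j ≤ i
  · have : X ^ j * (C (p.coeff i) * ((i.descFactorial j : ℂ) • (X ^ (i - j) : ℂ[X]))) =
        (p.coeff i * i.descFactorial j) • (X ^ i : ℂ[X]) := by
      conv_rhs => rw [← Nat.add_sub_cancel' hij, pow_add]
      rw [smul_eq_C_mul, smul_eq_C_mul, Nat.add_sub_cancel' hij]
      simp only [map_mul, map_natCast]
      ring
    rw [this]
    exact Submodule.smul_mem _ _ (Submodule.subset_span ⟨i, hi, rfl⟩)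
  · rw [Nat.descFactorial_eq_zero_iff_lt.mpr (not_le.mp hij)]
    simp

open Polynomial in
lemma polySpan_eq (p : ℂ[X]) :
    Submodule.span ℂ (({1, X} : Set ℂ[X]) ∪
        Set.range fun j : ℕ => X ^ (j+1) * derivative^[j+1] p) =
      Submodule.span ℂ ((fun i : ℕ => (X ^ i : ℂ[X])) ''
        ((insert 0 (insert 1 p.support) : Finset ℕ) : Set ℕ)) := by
  apply le_antisymm
  · rw [Submodule.span_le]
    rintro q (hq | ⟨j, rfl⟩)
    · rcases hq with rfl | rfl
      · exact Submodule.subset_span ⟨0, by simp, by simp⟩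
      · exact Submodule.subset_span ⟨1, by simp, by simp⟩
    · refine Submodule.span_mono (Set.image_mono ?_) (gen_mem_span p (j+1))
      intro i hi
      have hi' : i ∈ p.support := hi
      simp only [Finset.mem_coe, Finset.mem_insert]
      exact Or.inr (Or.inr hi')
  · rw [Submodule.span_le]
    rintro _ ⟨i, hi, rfl⟩
    simp only [Finset.mem_coe, Finset.mem_insert] at hi
    by_cases h0 : i = 0
    · exact Submodule.subset_span (by simp [h0])
    by_cases h1 : i = 1
    · exact Submodule.subset_span (by simp [h1])
    have := X_pow_mem_Usub p i (by tauto) h0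
    exact Submodule.span_mono (Set.subset_union_right) this

/-- multiplication by a polynomial -/
def mulPoly (N : ℕ) : Polynomial ℂ →ₗ[ℂ] ((ℝ → MatC N) → ℝ → MatC N) where
  toFun q := fun Q x => (q.eval (x : ℂ)) • Q x
  map_add' q r := by
    funext Q x
    simp [add_smul]
  map_smul' c q := by
    funext Q x
    simp [mul_smul]

lemma mulPoly_apply (N : ℕ) (q : Polynomial ℂ) (Q : ℝ → MatC N) (x : ℝ) :
    mulPoly N q Q x = (q.eval (x : ℂ)) • Q x := rfl

lemma iteratedDeriv_poly (p : Polynomial ℂ) (n : ℕ) :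
    iteratedDeriv n (fun z => p.eval z) = fun z => (Polynomial.derivative^[n] p).eval z := by
  induction n with
  | zero => simp
  | succ n ih =>
    rw [iteratedDeriv_succ, ih, Function.iterate_succ_apply']
    funext z
    simp

/-- the candidate basis of `g_φ` for a polynomial `φ` -/
def vfam (N : ℕ) (a : ℕ → ℝ) (ν : ℝ) (φ : ℂ → ℂ) (S : Finset ℕ) :
    S ⊕ Fin 2 → ((ℝ → MatC N) → ℝ → MatC N) :=
  Sum.elim (fun i => mulPoly N (Polynomial.X ^ (i : ℕ))) ![OpD N a, OpDdag N ν φ]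

open Polynomial in
lemma gphi_eq_span (N : ℕ) (a : ℕ → ℝ) (ν : ℝ) (p : ℂ[X]) :
    gphi N a ν (fun z => p.eval z) = Submodule.span ℂ
      (Set.range (vfam N a ν (fun z => p.eval z) (insert 0 (insert 1 p.support)))) := by
  have h1 : ({id, OpD N a, OpDdag N ν (fun z => p.eval z), OpM N} ∪
      Set.range fun j : ℕ => OpMj N (fun z => p.eval z) (j + 1)) =
      mulPoly N '' (({1, X} : Set ℂ[X]) ∪
        Set.range fun j : ℕ => X ^ (j+1) * derivative^[j+1] p) ∪
        {OpD N a, OpDdag N ν (fun z => p.eval z)} := by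
    have e1 : mulPoly N 1 = id := by funext Q x; simp [mulPoly_apply]
    have e2 : mulPoly N X = OpM N := by funext Q x; simp [mulPoly_apply, OpM]
    have e3 : (⇑(mulPoly N) ∘ fun j : ℕ => X ^ (j+1) * derivative^[j+1] p) =
        fun j : ℕ => OpMj N (fun z => p.eval z) (j + 1) := by
      funext j Q x
      simp only [Function.comp_apply, mulPoly_apply, OpMj, iteratedDeriv_poly, eval_mul, eval_pow,
        eval_X]
    rw [Set.image_union, ← Set.range_comp, e3, Set.image_pair, e1, e2]
    ext T
    simp only [Set.mem_union, Set.mem_insert_iff, Set.mem_singleton_iff]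
    tauto
  have h2 : Set.range (vfam N a ν (fun z => p.eval z) (insert 0 (insert 1 p.support))) =
      mulPoly N '' ((fun i : ℕ => (X ^ i : ℂ[X])) ''
        ((insert 0 (insert 1 p.support) : Finset ℕ) : Set ℕ)) ∪
        {OpD N a, OpDdag N ν (fun z => p.eval z)} := by
    rw [vfam, Set.Sum.elim_range, Matrix.range_cons, Matrix.range_cons, Matrix.range_empty,
      Set.image_image, Set.image_eq_range, Set.union_empty]
    rfl
  rw [gphi, h1, h2, Submodule.span_union, Submodule.span_union, ← Submodule.map_span,
    ← Submodule.map_span, polySpan_eq]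

lemma vfam_linInd (N : ℕ) (hN : 2 ≤ N) (a : ℕ → ℝ) (ν : ℝ) (φ : ℂ → ℂ) (S : Finset ℕ) :
    LinearIndependent ℂ (vfam N a ν φ S) := by
  rw [Fintype.linearIndependent_iff]
  intro g hg
  set f : Polynomial ℂ := ∑ i : S, g (Sum.inl i) • Polynomial.X ^ (i : ℕ) with hf
  set α := g (Sum.inr 0) with hα
  set β := g (Sum.inr 1) with hβ
  have key : ∀ (Q : ℝ → MatC N) (x : ℝ),
      (f.eval (x : ℂ)) • Q x + α • OpD N a Q x + β • OpDdag N ν φ Q x = 0 := by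
    intro Q x
    have := congrFun (congrFun hg Q) x
    rw [Fintype.sum_sum_type] at this
    simp only [vfam, Sum.elim_inl, Sum.elim_inr, Fin.sum_univ_two, ← map_smul, ← map_sum] at this
    rw [← hf] at this
    simpa [mulPoly_apply, ← hα, ← hβ, add_assoc] using this
  have hd0 : deriv (fun _ : ℝ => (1 : MatC N)) 1 = 0 := (hasDerivAt_const (1 : ℝ) (1 : MatC N)).deriv
  have key1 := key (fun _ => 1) 1
  simp only [OpD, OpDdag] at key1
  rw [hd0] at key1
  have hβ0 : β = 0 := by
    have k0 := congrFun (congrFun key1 ⟨0, by omega⟩) ⟨0, by omega⟩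
    have k1 := congrFun (congrFun key1 ⟨1, by omega⟩) ⟨1, by omega⟩
    simp [Amat, Jmat] at k0 k1
    linear_combination k0 - k1
  have hα0 : α = 0 := by
    have key2 := key (fun x => (x : ℂ) • 1) 1
    have hd : deriv (fun x : ℝ => (x : ℂ) • (1 : MatC N)) 1 = 1 := by
      have := (Complex.ofRealCLM.hasDerivAt (x := (1 : ℝ))).smul_const (1 : MatC N)
      rw [Complex.ofRealCLM_apply, Complex.ofReal_one, one_smul] at this
      exact this.deriv
    simp only [OpD, OpDdag] at key2
    rw [hd] at key2
    have k1 := congrFun (congrFun key1 ⟨0, by omega⟩) ⟨0, by omega⟩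
    have k2 := congrFun (congrFun key2 ⟨0, by omega⟩) ⟨0, by omega⟩
    simp [hβ0, Amat] at k1 k2
    linear_combination k2 - k1
  have hf0 : f = 0 := by
    apply Polynomial.eq_zero_of_infinite_isRoot
    refine Set.Infinite.mono ?_ (Set.infinite_range_of_injective Complex.ofReal_injective)
    rintro _ ⟨x, rfl⟩
    have k := congrFun (congrFun (key (fun _ => 1) x) ⟨0, by omega⟩) ⟨0, by omega⟩
    simpa [hα0, hβ0] using k
  rintro (i | i)
  · have := congrArg (fun q => Polynomial.coeff q (i : ℕ)) hf0
    simp only [hf, Polynomial.finsetSum_coeff, Polynomial.coeff_smul, Polynomial.coeff_X_pow,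
      Polynomial.coeff_zero, smul_eq_mul, mul_ite, mul_one, mul_zero] at this
    rw [Finset.sum_eq_single i] at this
    · simpa using this
    · intro b _ hb
      rw [if_neg]
      exact fun h => hb (Subtype.ext h.symm)
    · simp
  · fin_cases i
    · exact hα0
    · exact hβ0

/-- the descending Pochhammer polynomials as a polynomial sequence -/
def descSeq : Polynomial.Sequence ℂ where
  elems' := descPochhammer ℂ
  degree_eq' i := by
    rw [Polynomial.degree_eq_natDegree (monic_descPochhammer ℂ i).ne_zero,
      descPochhammer_natDegree]

lemma iteratedDeriv_gen (φ : ℂ → ℂ) (hφ : Differentiable ℂ φ) (n j : ℕ) :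
    iteratedDeriv n (fun z => z ^ j * iteratedDeriv j φ z) 0 =
      (n.descFactorial j : ℂ) * iteratedDeriv n φ 0 := by
  have hc : ContDiff ℂ ∞ φ := hφ.contDiff
  have hcj : ContDiff ℂ ∞ (iteratedDeriv j φ) :=
    ((contDiff_iff_iteratedDeriv.mp hc).2 j (by exact_mod_cast ENat.coe_lt_top j)).contDiff
  have h1 : ContDiffAt ℂ n (fun z : ℂ => z ^ j) 0 := by fun_prop
  have h2 : ContDiffAt ℂ n (iteratedDeriv j φ) 0 :=
    (hcj.of_le (by exact_mod_cast le_top)).contDiffAt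
  have h3 := iteratedDeriv_mul h1 h2
  have h4 : (fun z => z ^ j * iteratedDeriv j φ z) = (fun z : ℂ => z ^ j) * iteratedDeriv j φ := rfl
  rw [h4, h3]
  simp only [iteratedDeriv_fun_pow_zero]
  by_cases hjn : j ≤ n
  · rw [Finset.sum_eq_single_of_mem j (Finset.mem_range.mpr (by omega))]
    · rw [if_pos rfl, iteratedDeriv_eq_iterate, iteratedDeriv_eq_iterate, iteratedDeriv_eq_iterate,
        ← Function.iterate_add_apply, Nat.sub_add_cancel hjn,
        Nat.descFactorial_eq_factorial_mul_choose]
      push_cast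
      ring
    · intro i _ hi
      simp [hi]
  · rw [Nat.descFactorial_eq_zero_iff_lt.mpr (not_le.mp hjn)]
    rw [Finset.sum_eq_zero]
    · simp
    · intro i hi
      have : i ≠ j := by
        have := Finset.mem_range.mp hi
        omega
      simp [this]

lemma poly_of_finite (N : ℕ) (hN : 2 ≤ N) (a : ℕ → ℝ) (ν : ℝ)
    (φ : ℂ → ℂ) (hφ : Differentiable ℂ φ) (hfd : FiniteDimensional ℂ ↥(gphi N a ν φ)) :
    ∃ p : Polynomial ℂ, ∀ z : ℂ, φ z = p.eval z := by
  have hmem : ∀ j : ℕ, OpMj N φ (j+1) ∈ gphi N a ν φ := fun j =>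
    Submodule.subset_span (Or.inr ⟨j, rfl⟩)
  have hdep : ¬ LinearIndependent ℂ (fun j : ℕ => (⟨OpMj N φ (j+1), hmem j⟩ : gphi N a ν φ)) := by
    intro h
    have := h.finite
    exact not_finite ℕ
  rw [linearIndependent_iff'] at hdep
  push Not at hdep
  obtain ⟨s, g, hsum, i, his, hgi⟩ := hdep
  have h1 : ∀ x : ℝ, ∑ j ∈ s, g j * ((x : ℂ) ^ (j+1) * iteratedDeriv (j+1) φ (x : ℂ)) = 0 := by
    intro x
    have h := congrArg Subtype.val hsum
    have h := congrFun (congrFun h (fun _ => 1)) x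
    have h := congrFun (congrFun h ⟨0, by omega⟩) ⟨0, by omega⟩
    simpa [OpMj, Finset.sum_apply, Matrix.sum_apply] using h
  have hc : ContDiff ℂ ∞ φ := hφ.contDiff
  have hcj : ∀ j, ContDiff ℂ ∞ (iteratedDeriv j φ) :=
    fun j => ((contDiff_iff_iteratedDeriv.mp hc).2 j (by exact_mod_cast ENat.coe_lt_top j)).contDiff
  have hgen : ∀ j, ContDiff ℂ ∞ (fun z : ℂ => g j * (z ^ (j+1) * iteratedDeriv (j+1) φ z)) := by
    intro j
    have := hcj (j+1)
    fun_prop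
  have h2 : (fun z : ℂ => ∑ j ∈ s, g j * (z ^ (j+1) * iteratedDeriv (j+1) φ z)) = fun _ => 0 := by
    have hd : Differentiable ℂ
        (fun z : ℂ => ∑ j ∈ s, g j * (z ^ (j+1) * iteratedDeriv (j+1) φ z)) := by
      refine Differentiable.fun_sum fun j _ => (hgen j).differentiable (by simp)
    refine AnalyticOnNhd.eq_of_frequently_eq (z₀ := 0)
      (fun z _ => hd.analyticAt z) (fun z _ => analyticAt_const) ?_
    have ht : Filter.Tendsto (fun n : ℕ => (((1 / ((n : ℝ) + 1)) : ℝ) : ℂ)) Filter.atTop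
        (nhdsWithin 0 {0}ᶜ) := by
      rw [tendsto_nhdsWithin_iff]
      constructor
      · have := (Complex.continuous_ofReal.tendsto 0).comp
          (tendsto_one_div_add_atTop_nhds_zero_nat (𝕜 := ℝ))
        simpa [Function.comp_def] using this
      · refine Filter.Eventually.of_forall fun n => ?_
        simp only [Set.mem_compl_iff, Set.mem_singleton_iff, Complex.ofReal_eq_zero]
        positivity
    exact ht.frequently (Filter.Frequently.of_forall fun n => h1 _)
  set P : Polynomial ℂ := ∑ j ∈ s, g j • descPochhammer ℂ (j+1) with hP
  have hP0 : P ≠ 0 := by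
    intro h0
    have hli := descSeq.linearIndependent.comp (fun j : ℕ => j + 1) (add_left_injective 1)
    rw [linearIndependent_iff'] at hli
    exact hgi (hli s g h0 i his)
  have h3 : ∀ n : ℕ, P.eval (n : ℂ) * iteratedDeriv n φ 0 = 0 := by
    intro n
    have h := congrArg (fun f => iteratedDeriv n f 0) h2
    beta_reduce at h
    rw [iteratedDeriv_fun_sum (fun j _ => ((hgen j).of_le (by exact_mod_cast le_top)).contDiffAt)]
      at h
    simp only [iteratedDeriv_const_mul_field, iteratedDeriv_gen φ hφ] at h
    rw [hP, Polynomial.eval_finsetSum, Finset.sum_mul]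
    simp only [Polynomial.eval_smul, descPochhammer_eval_eq_descFactorial, smul_eq_mul, mul_assoc]
    rw [h]
    simp
  have hfin : {n : ℕ | iteratedDeriv n φ 0 ≠ 0}.Finite := by
    refine Set.Finite.subset ((Polynomial.finite_setOfPred_isRoot hP0).preimage
      (Nat.cast_injective (R := ℂ)).injOn) ?_
    intro n hn
    exact (mul_eq_zero.mp (h3 n)).resolve_right hn
  refine ⟨∑ n ∈ hfin.toFinset, Polynomial.C ((n.factorial : ℂ)⁻¹ * iteratedDeriv n φ 0) *
    Polynomial.X ^ n, fun z => ?_⟩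
  rw [← Complex.taylorSeries_eq_of_entire' 0 z hφ, tsum_eq_sum (s := hfin.toFinset)]
  · simp [Polynomial.eval_finsetSum]
  · intro n hn
    have : iteratedDeriv n φ 0 = 0 := by simpa using hn
    simp [this]

lemma finrank_gphi (N : ℕ) (hN : 2 ≤ N) (a : ℕ → ℝ) (ν : ℝ) (p : Polynomial ℂ) :
    Module.finrank ℂ ↥(gphi N a ν (fun z => p.eval z)) =
      (insert 0 (insert 1 p.support)).card + 2 := by
  rw [gphi_eq_span, finrank_span_eq_card (vfam_linInd N hN a ν _ _)]
  simp

/-- `g_φ` is finite dimensional iff `φ` is a polynomial; if `φ` is a polynomial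
with `ℓ` nonzero coefficients then `dim g_φ = k + 2` where `k = ℓ+2` if `φ(0) = φ'(0) = 0`,
`k = ℓ+1` if exactly one of `φ(0), φ'(0)` vanishes, and `k = ℓ` if both are nonzero.
(Note `φ(0) = p.coeff 0` and `φ'(0) = p.coeff 1`.) -/
theorem gphi_finiteDimensional_iff_polynomial
    (N : ℕ) (hN : 2 ≤ N) (a : ℕ → ℝ) (ν : ℝ) (hν : 0 < ν)
    (φ : ℂ → ℂ) (hφ : Differentiable ℂ φ) :
    (FiniteDimensional ℂ ↥(gphi N a ν φ) ↔
      ∃ p : Polynomial ℂ, ∀ z : ℂ, φ z = p.eval z) ∧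
    (∀ p : Polynomial ℂ, (∀ z : ℂ, φ z = p.eval z) →
      ((p.coeff 0 = 0 ∧ p.coeff 1 = 0 →
          Module.finrank ℂ ↥(gphi N a ν φ) = p.support.card + 2 + 2) ∧
        (p.coeff 0 = 0 ∧ p.coeff 1 ≠ 0 →
          Module.finrank ℂ ↥(gphi N a ν φ) = p.support.card + 1 + 2) ∧
        (p.coeff 0 ≠ 0 ∧ p.coeff 1 = 0 →
          Module.finrank ℂ ↥(gphi N a ν φ) = p.support.card + 1 + 2) ∧
        (p.coeff 0 ≠ 0 ∧ p.coeff 1 ≠ 0 →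
          Module.finrank ℂ ↥(gphi N a ν φ) = p.support.card + 2))) := by
  constructor
  · constructor
    · exact poly_of_finite N hN a ν φ hφ
    · rintro ⟨p, hp⟩
      obtain rfl : φ = fun z => p.eval z := funext hp
      rw [gphi_eq_span]
      exact FiniteDimensional.span_of_finite ℂ (Set.finite_range _)
  · intro p hp
    obtain rfl : φ = fun z => p.eval z := funext hp
    rw [finrank_gphi N hN a ν p]
    refine ⟨?_, ?_, ?_, ?_⟩ <;> rintro ⟨h0, h1⟩
    · rw [Finset.card_insert_of_notMem (by simp [h0]), Finset.card_insert_of_notMem (by simp [h1])]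
    · rw [Finset.card_insert_of_notMem (by simp [h0]), Finset.insert_eq_of_mem (by simp [h1])]
    · rw [Finset.insert_eq_of_mem (by simp [h0]), Finset.card_insert_of_notMem (by simp [h1])]
    · rw [Finset.insert_eq_of_mem (by simp [h0]), Finset.insert_eq_of_mem (by simp [h1])]
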